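/- There is a universal constant C > 0 such that for every probability density f on ℝ, every r > 0, and every ε with |ε| ≤ r/2: defining Δ_ε(x) = (f_r(x+ε) − f_r(x) − ε·f_r'(x))/f_r(x), one has E_{x~f_r}[Δ_ε(x)²] ≤ C·ε⁴/r⁴. -/

import Mathlib

/-!
Write `φ` for the density of `N(0, r²)`, `D u = φ (u + ε) - φ u - ε φ' u`, `F` for the smoothed
density and `N x = F (x + ε) - F x - ε F' x`. Differentiating under the integral sign gives
`N x = ∫ f y D (x - y) dy`. Cauchy-Schwarz in `y` with respect to the weight `f y φ (x - y)` yields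
`N x ^ 2 / F x ≤ ∫ f y (D ^ 2 / φ) (x - y) dy` (`sq_remainder_le`). Integrating in `x`, the
right-hand side is the integral of a convolution of `f` with `D ^ 2 / φ`, so it equals
`∫ D ^ 2 / φ` because `f` has mass one.

Completing squares in the exponents shows (`gaussChi_mul_gaussPdf`) that `D ^ 2 / φ` is a
combination of the densities of `N(-2ε, r²)`, `N(0, r²)` and `N(-ε, r²)` with coefficients
polynomial in `u`, so the first two Gaussian moments give
`∫ D ^ 2 / φ = exp (ε² / r²) - 1 - ε² / r²` (`integral_gaussChi`). This is at most `ε⁴ / r⁴`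
as soon as `|ε| ≤ r`, so the constant `C = 1` works.
-/

open MeasureTheory Real

noncomputable section

/-- The Gaussian density with mean 0 and variance `r ^ 2`. -/
def gaussPdf (r x : ℝ) : ℝ :=
  Real.exp (-(x ^ 2) / (2 * r ^ 2)) / Real.sqrt (2 * Real.pi * r ^ 2)

/-- The `r`-smoothed density `f_r`, i.e. the density of `Y + Z` where `Y ~ f` and
`Z ~ N(0, r²)` independent. -/
def smoothed (f : ℝ → ℝ) (r x : ℝ) : ℝ := ∫ y, f y * gaussPdf r (x - y)

/-- The score function `s_r = f_r' / f_r` of the smoothed density. -/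
def score (f : ℝ → ℝ) (r x : ℝ) : ℝ :=
  deriv (fun t => smoothed f r t) x / smoothed f r x

/-- The Fisher information `I_r = E_{x ~ f_r}[s_r(x)²]` of the smoothed density. -/
def fisherInfo (f : ℝ → ℝ) (r : ℝ) : ℝ := ∫ x, score f r x ^ 2 * smoothed f r x

/-- `f` is a probability density on `ℝ`. -/
def IsDensity (f : ℝ → ℝ) : Prop :=
  (∀ x, 0 ≤ f x) ∧ MeasureTheory.Integrable f ∧ (∫ x, f x) = 1

open ProbabilityTheory

/-! ### Gaussian moments -/

lemma gaussPdf_add_eq {r : ℝ} (m u : ℝ) :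
    gaussPdf r (u + m) = gaussianPDFReal (-m) (Real.toNNReal (r ^ 2)) u := by
  simp only [gaussPdf, gaussianPDFReal, Real.coe_toNNReal _ (sq_nonneg r), sub_neg_eq_add]
  rw [div_eq_inv_mul]

/-- Integrals of quadratic polynomials against a translated Gaussian density. -/
lemma quadratic_moment {r : ℝ} (hr : 0 < r) (m a b c : ℝ) :
    Integrable (fun u => gaussPdf r (u + m) * (a + b * u + c * u ^ 2)) ∧
      ∫ u, gaussPdf r (u + m) * (a + b * u + c * u ^ 2) =
        a - b * m + c * (r ^ 2 + m ^ 2) := by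
  set v : NNReal := Real.toNNReal (r ^ 2) with hv
  have hv0 : v ≠ 0 := by
    rw [hv]; exact (Real.toNNReal_pos.2 (by positivity)).ne'
  have hvr : (v : ℝ) = r ^ 2 := Real.coe_toNNReal _ (sq_nonneg r)
  have hid : MemLp (id : ℝ → ℝ) 2 (gaussianReal (-m) v) := by
    simpa using memLp_id_gaussianReal (μ := -m) (v := v) 2
  have i1 : Integrable (fun u : ℝ => u) (gaussianReal (-m) v) := hid.integrable (by norm_num)
  have i2 : Integrable (fun u : ℝ => u ^ 2) (gaussianReal (-m) v) := hid.integrable_sq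
  have ia : Integrable (fun u : ℝ => a + b * u) (gaussianReal (-m) v) :=
    (integrable_const a).add (i1.const_mul b)
  have iq : Integrable (fun u : ℝ => a + b * u + c * u ^ 2) (gaussianReal (-m) v) :=
    ia.add (i2.const_mul c)
  simp_rw [gaussPdf_add_eq]
  constructor
  · rw [gaussianReal_of_var_ne_zero _ hv0,
      integrable_withDensity_iff_integrable_smul' (measurable_gaussianPDF _ _)
        (ae_of_all _ fun _ => gaussianPDF_lt_top)] at iq
    simpa only [toReal_gaussianPDF, smul_eq_mul] using iq
  · have h1 : ∫ u, u ∂(gaussianReal (-m) v) = -m := integral_id_gaussianReal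
    have h2 : ∫ u, u ^ 2 ∂(gaussianReal (-m) v) = r ^ 2 + m ^ 2 := by
      have hvar := variance_eq_sub hid
      rw [variance_id_gaussianReal] at hvar
      simp only [Pi.pow_apply, id_eq] at hvar
      rw [h1, hvr] at hvar
      linarith
    have h := integral_gaussianReal_eq_integral_smul (μ := -m) (v := v)
      (f := fun u : ℝ => a + b * u + c * u ^ 2) hv0
    simp only [smul_eq_mul] at h
    rw [← h, integral_add ia (i2.const_mul c),
      integral_add (integrable_const a) (i1.const_mul b), integral_const_mul,
      integral_const_mul, h1, h2]
    simp only [integral_const, probReal_univ, one_smul]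
    ring

/-! ### The Gaussian remainder and its chi-square type integral -/

lemma gaussPdf_pos {r : ℝ} (hr : 0 < r) (x : ℝ) : 0 < gaussPdf r x := by
  unfold gaussPdf
  have := Real.pi_pos
  positivity

lemma continuous_gaussPdf (r : ℝ) : Continuous (gaussPdf r) := by
  unfold gaussPdf
  fun_prop

lemma gaussPdf_le (r x : ℝ) : gaussPdf r x ≤ 1 / √(2 * π * r ^ 2) := by
  unfold gaussPdf
  gcongr
  rw [Real.exp_le_one_iff, neg_div]
  exact neg_nonpos.2 (by positivity)

lemma hasDerivAt_gaussPdf {r : ℝ} (hr : 0 < r) (x : ℝ) :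
    HasDerivAt (gaussPdf r) (-(x / r ^ 2) * gaussPdf r x) x := by
  unfold gaussPdf
  have h : HasDerivAt (fun x : ℝ => -(x ^ 2) / (2 * r ^ 2)) (-(x / r ^ 2)) x := by
    have h0 := ((hasDerivAt_pow 2 x).neg).div_const (2 * r ^ 2)
    refine h0.congr_deriv ?_
    field_simp
    simp
  refine (h.exp.div_const _).congr_deriv ?_
  ring

/-- The derivative of the Gaussian density is bounded. -/
lemma abs_deriv_gaussPdf_le {r : ℝ} (hr : 0 < r) (x : ℝ) :
    |-(x / r ^ 2) * gaussPdf r x| ≤ 1 / r * (1 / √(2 * π * r ^ 2)) := by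
  have hs : 0 < √(2 * π * r ^ 2) := by have := Real.pi_pos; positivity
  have hexp : 1 + x ^ 2 / (2 * r ^ 2) ≤ Real.exp (x ^ 2 / (2 * r ^ 2)) := by
    linarith [Real.add_one_le_exp (x ^ 2 / (2 * r ^ 2))]
  -- `|x| ≤ r (1 + x² / (2r²)) ≤ r exp (x² / (2r²))`
  have hx : |x| ≤ r * Real.exp (x ^ 2 / (2 * r ^ 2)) := by
    refine le_trans ?_ (mul_le_mul_of_nonneg_left hexp hr.le)
    have : r * (1 + x ^ 2 / (2 * r ^ 2)) - |x| = ((|x| - r) ^ 2 + r ^ 2) / (2 * r) := by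
      rw [← sq_abs x]; field_simp; ring
    have h2 : 0 ≤ ((|x| - r) ^ 2 + r ^ 2) / (2 * r) := by positivity
    linarith
  have key : |x| * Real.exp (-(x ^ 2) / (2 * r ^ 2)) ≤ r := by
    rw [neg_div, Real.exp_neg, ← div_eq_mul_inv, div_le_iff₀ (Real.exp_pos _)]
    exact hx
  rw [abs_mul, abs_neg, abs_div, abs_of_pos (gaussPdf_pos hr x),
    abs_of_pos (by positivity : 0 < r ^ 2), gaussPdf]
  calc |x| / r ^ 2 * (Real.exp (-(x ^ 2) / (2 * r ^ 2)) / √(2 * π * r ^ 2))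
      = (|x| * Real.exp (-(x ^ 2) / (2 * r ^ 2))) * (1 / r ^ 2 * (1 / √(2 * π * r ^ 2))) := by
        ring
    _ ≤ r * (1 / r ^ 2 * (1 / √(2 * π * r ^ 2))) := by gcongr
    _ = 1 / r * (1 / √(2 * π * r ^ 2)) := by field_simp

/-- The first-order Taylor remainder `φ (u + ε) - φ u - ε φ' u` of the Gaussian density. -/
def gaussRem (r ε u : ℝ) : ℝ :=
  gaussPdf r (u + ε) - gaussPdf r u - ε * (-(u / r ^ 2) * gaussPdf r u)

/-- The quotient `gaussRem ^ 2 / φ`, written as a combination of translated Gaussian densities with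
polynomial coefficients. -/
def gaussChi (r ε u : ℝ) : ℝ :=
  Real.exp (ε ^ 2 / r ^ 2) * gaussPdf r (u + 2 * ε) + gaussPdf r u * (1 - ε / r ^ 2 * u) ^ 2
    - 2 * (gaussPdf r (u + ε) * (1 - ε / r ^ 2 * u))

lemma gaussChi_mul_gaussPdf {r : ℝ} (hr : 0 < r) (ε u : ℝ) :
    gaussChi r ε u * gaussPdf r u = gaussRem r ε u ^ 2 := by
  have h : Real.exp (ε ^ 2 / r ^ 2) * gaussPdf r (u + 2 * ε) * gaussPdf r u
      = gaussPdf r (u + ε) ^ 2 := by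
    have he : Real.exp (ε ^ 2 / r ^ 2) * Real.exp (-((u + 2 * ε) ^ 2) / (2 * r ^ 2))
        * Real.exp (-(u ^ 2) / (2 * r ^ 2)) = Real.exp (-((u + ε) ^ 2) / (2 * r ^ 2)) ^ 2 := by
      rw [← Real.exp_add, ← Real.exp_add, sq (Real.exp _), ← Real.exp_add]
      congr 1
      field_simp
      ring
    unfold gaussPdf
    rw [div_pow, ← he]
    ring
  unfold gaussChi gaussRem
  linear_combination h

lemma gaussChi_moments {r : ℝ} (hr : 0 < r) (ε : ℝ) :
    Integrable (gaussChi r ε) ∧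
      ∫ u, gaussChi r ε u = Real.exp (ε ^ 2 / r ^ 2) - 1 - ε ^ 2 / r ^ 2 := by
  obtain ⟨i1, e1⟩ := quadratic_moment hr (2 * ε) (Real.exp (ε ^ 2 / r ^ 2)) 0 0
  obtain ⟨i2, e2⟩ := quadratic_moment hr 0 1 (-2 * (ε / r ^ 2)) ((ε / r ^ 2) ^ 2)
  obtain ⟨i3, e3⟩ := quadratic_moment hr ε (-2) (2 * (ε / r ^ 2)) 0
  have hfun : gaussChi r ε = fun u =>
      gaussPdf r (u + 2 * ε) * (Real.exp (ε ^ 2 / r ^ 2) + 0 * u + 0 * u ^ 2)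
      + gaussPdf r (u + 0) * (1 + -2 * (ε / r ^ 2) * u + (ε / r ^ 2) ^ 2 * u ^ 2)
      + gaussPdf r (u + ε) * (-2 + 2 * (ε / r ^ 2) * u + 0 * u ^ 2) := by
    funext u
    rw [gaussChi, add_zero]
    ring
  rw [hfun]
  refine ⟨(i1.add i2).add i3, ?_⟩
  refine (integral_add (i1.add i2) i3).trans ?_
  refine (congrArg (· + _) (integral_add i1 i2)).trans ?_
  simp only [e1, e2, e3]
  field_simp
  ring

lemma integrable_gaussChi {r : ℝ} (hr : 0 < r) (ε : ℝ) : Integrable (gaussChi r ε) :=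
  (gaussChi_moments hr ε).1

lemma integral_gaussChi {r : ℝ} (hr : 0 < r) (ε : ℝ) :
    ∫ u, gaussChi r ε u = Real.exp (ε ^ 2 / r ^ 2) - 1 - ε ^ 2 / r ^ 2 :=
  (gaussChi_moments hr ε).2

/-! ### Smoothing -/

lemma integrable_mul_gaussPdf {f : ℝ → ℝ} (hf : Integrable f) {r : ℝ} (hr : 0 < r) (x : ℝ) :
    Integrable fun y => f y * gaussPdf r (x - y) := by
  have hm : Continuous fun y => gaussPdf r (x - y) :=
    (continuous_gaussPdf r).comp (continuous_const.sub continuous_id)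
  refine hf.mul_bdd (c := 1 / √(2 * π * r ^ 2)) hm.aestronglyMeasurable
    (ae_of_all _ fun y => ?_)
  rw [Real.norm_of_nonneg (gaussPdf_pos hr _).le]
  exact gaussPdf_le r _

/-- Differentiation of the smoothed density under the integral sign. -/
lemma hasDerivAt_smoothed {f : ℝ → ℝ} (hf : Integrable f) {r : ℝ} (hr : 0 < r) (x : ℝ) :
    Integrable (fun y => f y * (-((x - y) / r ^ 2) * gaussPdf r (x - y))) ∧
      HasDerivAt (fun t => smoothed f r t)
        (∫ y, f y * (-((x - y) / r ^ 2) * gaussPdf r (x - y))) x := by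
  have hc : Continuous fun y => -((x - y) / r ^ 2) * gaussPdf r (x - y) := by
    have := continuous_gaussPdf r
    fun_prop
  refine hasDerivAt_integral_of_dominated_loc_of_deriv_le (s := Set.univ)
    (F := fun t y => f y * gaussPdf r (t - y))
    (F' := fun t y => f y * (-((t - y) / r ^ 2) * gaussPdf r (t - y)))
    (bound := fun y => |f y| * (1 / r * (1 / √(2 * π * r ^ 2)))) Filter.univ_mem
    (Filter.Eventually.of_forall fun t => (integrable_mul_gaussPdf hf hr t).aestronglyMeasurable)
    (integrable_mul_gaussPdf hf hr x) (hf.aestronglyMeasurable.mul hc.aestronglyMeasurable)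
    (ae_of_all _ fun y t _ => ?_) (hf.abs.mul_const _) (ae_of_all _ fun y t _ => ?_)
  · rw [Real.norm_eq_abs, abs_mul]
    exact mul_le_mul_of_nonneg_left (abs_deriv_gaussPdf_le hr _) (abs_nonneg _)
  · exact ((hasDerivAt_gaussPdf hr (t - y)).comp_sub_const t y).const_mul (f y)

/-- Cauchy-Schwarz for the remainder of the smoothed density. With `a = N x / F x` it follows by
integrating `2 a D - a² φ ≤ D² / φ` against `f`. -/
lemma sq_remainder_le {f : ℝ → ℝ} (h0 : ∀ y, 0 ≤ f y) (hf : Integrable f) {r : ℝ} (hr : 0 < r)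
    (ε x : ℝ) (hG : Integrable fun y => f y * gaussChi r ε (x - y)) :
    ((smoothed f r (x + ε) - smoothed f r x -
        ε * deriv (fun t => smoothed f r t) x) / smoothed f r x) ^ 2 * smoothed f r x
      ≤ ∫ y, f y * gaussChi r ε (x - y) := by
  obtain ⟨id', hd⟩ := hasDerivAt_smoothed hf hr x
  have i0 := integrable_mul_gaussPdf hf hr x
  have i1 := integrable_mul_gaussPdf hf hr (x + ε)
  set N := smoothed f r (x + ε) - smoothed f r x - ε * deriv (fun t => smoothed f r t) x with hN
  set a := N / smoothed f r x with ha
  have hfun : (fun y => f y * gaussRem r ε (x - y)) = fun y =>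
      f y * gaussPdf r (x + ε - y) - f y * gaussPdf r (x - y)
        - ε * (f y * (-((x - y) / r ^ 2) * gaussPdf r (x - y))) := by
    funext y
    rw [gaussRem, show x - y + ε = x + ε - y by ring]
    ring
  have iD : Integrable fun y => f y * gaussRem r ε (x - y) := by
    rw [hfun]
    exact (i1.sub i0).sub (id'.const_mul ε)
  have hD : ∫ y, f y * gaussRem r ε (x - y) = N := by
    rw [hfun]
    refine (integral_sub (i1.sub i0) (id'.const_mul ε)).trans ?_
    refine (congrArg (· - _) (integral_sub i1 i0)).trans ?_
    simp only [integral_const_mul, hN, hd.deriv]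
    rfl
  -- also valid when `F x = 0`, since division by zero then makes `a = 0`
  have haN : a ^ 2 * smoothed f r x = 2 * a * N - a ^ 2 * smoothed f r x := by
    rcases eq_or_ne (smoothed f r x) 0 with h | h
    · have : a = 0 := by rw [ha, h, div_zero]
      simp [this]
    · have : N = a * smoothed f r x := by rw [ha]; field_simp
      rw [this]; ring
  rw [haN, ← hD, smoothed, ← integral_const_mul, ← integral_const_mul,
    ← integral_sub (iD.const_mul _) (i0.const_mul _)]
  refine integral_mono ((iD.const_mul _).sub (i0.const_mul _)) hG fun y => ?_
  have hp := gaussPdf_pos hr (x - y)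
  have hG' := gaussChi_mul_gaussPdf hr ε (x - y)
  have hpt : 2 * a * gaussRem r ε (x - y) - a ^ 2 * gaussPdf r (x - y)
      ≤ gaussChi r ε (x - y) := by
    refine le_of_mul_le_mul_right ?_ hp
    rw [hG']
    nlinarith [sq_nonneg (gaussRem r ε (x - y) - a * gaussPdf r (x - y))]
  have := mul_le_mul_of_nonneg_left hpt (h0 y)
  calc _ = f y * (2 * a * gaussRem r ε (x - y) - a ^ 2 * gaussPdf r (x - y)) := by ring
    _ ≤ _ := this

/-- There is a universal constant `C > 0` such that for any density `f`, `r > 0` and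
`|ε| ≤ r/2`, with `Δ_ε(x) = (f_r(x+ε) − f_r(x) − ε f_r'(x)) / f_r(x)`, one has
`E_{x~f_r}[Δ_ε(x)²] ≤ C ε⁴ / r⁴`. -/
theorem smoothed_taylor_remainder_bound :
    ∃ C : ℝ, 0 < C ∧ ∀ (f : ℝ → ℝ) (r : ℝ), IsDensity f → 0 < r →
      ∀ ε : ℝ, |ε| ≤ r / 2 →
      (∫ x, ((smoothed f r (x + ε) - smoothed f r x -
          ε * deriv (fun t => smoothed f r t) x) / smoothed f r x) ^ 2 *
          smoothed f r x) ≤ C * ε ^ 4 / r ^ 4 := by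
  refine ⟨1, one_pos, ?_⟩
  rintro f r ⟨h0, hf, hmass⟩ hr ε hε
  have hGi := integrable_gaussChi hr ε
  have hconv := hf.integrable_convolution (ContinuousLinearMap.mul ℝ ℝ) hGi
  have hex := hf.ae_convolution_exists (ContinuousLinearMap.mul ℝ ℝ) hGi
  have hint := integral_convolution (ContinuousLinearMap.mul ℝ ℝ) hf hGi
  rw [integral_gaussChi hr, hmass, ContinuousLinearMap.mul_apply', one_mul] at hint
  refine (integral_mono_of_nonneg (ae_of_all _ fun x => ?_) hconv ?_).trans ?_
  · exact mul_nonneg (sq_nonneg _)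
      (integral_nonneg fun y => mul_nonneg (h0 y) (gaussPdf_pos hr _).le)
  · filter_upwards [hex] with x hx
    exact sq_remainder_le h0 hf hr ε x hx
  · rw [hint]
    have hle : ε ^ 2 / r ^ 2 ≤ 1 := by
      rw [div_le_one (by positivity), ← sq_abs ε]
      have := abs_nonneg ε
      gcongr
      linarith
    have h := Real.abs_exp_sub_one_sub_id_le (x := ε ^ 2 / r ^ 2)
      (by rw [abs_of_nonneg (by positivity)]; exact hle)
    refine (le_abs_self _).trans (h.trans (le_of_eq ?_))
    ring

end
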